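/- Monotone type (1) generalized quantifiers can be eliminated in favour of induced generalized atoms: let Q be a monotone generalized quantifier of type (1). Every formula χ of FO(Q) can be effectively translated into a formula χ* of FO(𝒜_Q) such that 𝔄,U ⊨ χ if and only if 𝔄,U ⊨ χ* for all models 𝔄 and all teams U whose domain contains the free variables of χ. More precisely, for every clean formula β of FO(Q) and every subformula φ of β, and for all 𝔄 and all appropriate teams U: 𝔄,U ⊨ φ iff 𝔄,U ⊨ φ*, where (·)* is the translation defined below; the translation χ* moreover contains no occurrence of ∃ or Q, its only quantifier being ∀. -/

import Mathlib

/- STATEMENT 13: Monotone type (1) generalized quantifiers can be eliminated in favour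
   of the induced generalized atoms. -/

/-- Assignments with a finite domain: a variable outside the domain is sent to `none`. -/
abbrev PAssign (A : Type) := ℕ → Option A

/-- `s[a/x]`. -/
def pupdate {A : Type} (s : PAssign A) (x : ℕ) (a : A) : PAssign A :=
  fun w => if w = x then some a else s w

/-- A model for a purely relational vocabulary `σ` with arities `ar`. -/
structure TModel (σ : Type) (ar : σ → ℕ) : Type 1 where
  A : Type
  ne : Nonempty A
  rel : ∀ R : σ, (Fin (ar R) → A) → Prop

/-- A generalized quantifier of type (1): an isomorphism-closed class of structures
`(A,B)` with `A ≠ ∅` and `B ⊆ A`.  `mem A hA` is `Q^A`. -/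
structure Quant1 : Type 1 where
  mem : ∀ (A : Type), Nonempty A → Set (Set A)
  iso_closed : ∀ (A B : Type) (hA : Nonempty A) (hB : Nonempty B) (e : A ≃ B) (X : Set A),
    X ∈ mem A hA → (e '' X) ∈ mem B hB

/-- A type (1) quantifier is monotone if `A ⊆ B` and `A ∈ Q^C` imply `B ∈ Q^C`. -/
def MonotoneQ (Q : Quant1) : Prop :=
  ∀ (C : Type) (hC : Nonempty C) (X Y : Set C), X ⊆ Y → X ∈ Q.mem C hC → Y ∈ Q.mem C hC

/-- The dual quantifier `Q^d := { (C,D) : (C, C∖D) ∉ Q }`. -/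
def Quant1.dual (Q : Quant1) : Quant1 where
  mem := fun A hA => {D | Dᶜ ∉ Q.mem A hA}
  iso_closed := by
    intro A B hA hB e X hX hcon
    apply hX
    have h := Q.iso_closed B A hB hA e.symm ((e '' X)ᶜ) hcon
    rwa [Set.image_compl_eq e.symm.bijective, Equiv.symm_image_image] at h

/-- The quantifier `Q' := { (A,B) : (A, A∖B) ∈ Q }`. -/
def Quant1.prime (Q : Quant1) : Quant1 where
  mem := fun A hA => {D | Dᶜ ∈ Q.mem A hA}
  iso_closed := by
    intro A B hA hB e X hX
    have h := Q.iso_closed A B hA hB e Xᶜ hX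
    rwa [Set.image_compl_eq e.bijective] at h

/-- The existential quantifier `∃` as a type (1) monotone generalized quantifier. -/
def exQ : Quant1 where
  mem := fun A _ => {X | X.Nonempty}
  iso_closed := by
    intro A B hA hB e X hX
    exact hX.image e

/-- The universal quantifier `∀ = ∃^d` as a type (1) monotone generalized quantifier. -/
def allQ : Quant1 := exQ.dual

/-- Formulas of first-order logic in negation normal form extended with type (1)
generalized quantifiers `Qx φ` and with the induced generalized atoms `A_Q(ȳ,x)`.
`FO(Q)` is the fragment using no induced atoms and only the quantifiers
`∃, ∀, Q, Q^d`; `FO(𝒜_Q)` is the fragment whose atoms are induced by `Q` and `Q'`. -/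
inductive GForm (σ : Type) (ar : σ → ℕ) : Type 1
  | rel (R : σ) (ts : Fin (ar R) → ℕ)
  | nrel (R : σ) (ts : Fin (ar R) → ℕ)
  | eq (x y : ℕ)
  | neq (x y : ℕ)
  | and (φ ψ : GForm σ ar)
  | or (φ ψ : GForm σ ar)
  | qu (Q : Quant1) (x : ℕ) (φ : GForm σ ar)
  | qatom (Q : Quant1) (k : ℕ) (ys : Fin k → ℕ) (x : ℕ)

/-- Lax team semantics.  For the quantifier: `𝔄,U ⊨ Qx φ` iff there is `f : U → Q^A`
with `𝔄,U[f/x] ⊨ φ`.  For the induced `k`-atom: `𝔄,U ⊨ A_Q(ȳ,x)` iff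
`Rel(U₀,x) ∈ Q^A` for each maximal nonempty subteam `U₀ ⊆ U` whose assignments all
agree on `ȳ`. -/
def GSat {σ : Type} {ar : σ → ℕ} (M : TModel σ ar) : Set (PAssign M.A) → GForm σ ar → Prop
  | U, .rel R ts => ∀ s ∈ U, ∃ vv : Fin (ar R) → M.A,
      (∀ i, s (ts i) = some (vv i)) ∧ M.rel R vv
  | U, .nrel R ts => ∀ s ∈ U, ∃ vv : Fin (ar R) → M.A,
      (∀ i, s (ts i) = some (vv i)) ∧ ¬ M.rel R vv
  | U, .eq x y => ∀ s ∈ U, ∃ a : M.A, s x = some a ∧ s y = some a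
  | U, .neq x y => ∀ s ∈ U, ∃ a b : M.A, s x = some a ∧ s y = some b ∧ a ≠ b
  | U, .and φ ψ => GSat M U φ ∧ GSat M U ψ
  | U, .or φ ψ => ∃ U₀ U₁ : Set (PAssign M.A),
      U₀ ⊆ U ∧ U₁ ⊆ U ∧ U₀ ∪ U₁ = U ∧ GSat M U₀ φ ∧ GSat M U₁ ψ
  | U, .qu Q x φ => ∃ f : PAssign M.A → Set M.A, (∀ s ∈ U, f s ∈ Q.mem M.A M.ne) ∧
      GSat M {t | ∃ s ∈ U, ∃ a ∈ f s, t = pupdate s x a} φ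
  | U, .qatom Q _ ys x => ∀ s ∈ U,
      {a : M.A | ∃ t ∈ U, (∀ i, t (ys i) = s (ys i)) ∧ t x = some a} ∈ Q.mem M.A M.ne

/-- Free variables. -/
def GForm.freeVars {σ : Type} {ar : σ → ℕ} : GForm σ ar → Finset ℕ
  | .rel _ ts => Finset.univ.image ts
  | .nrel _ ts => Finset.univ.image ts
  | .eq x y => {x, y}
  | .neq x y => {x, y}
  | .and φ ψ => φ.freeVars ∪ ψ.freeVars
  | .or φ ψ => φ.freeVars ∪ ψ.freeVars
  | .qu _ x φ => φ.freeVars.erase x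
  | .qatom _ _ ys x => insert x (Finset.univ.image ys)

/-- Bound variables. -/
def GForm.boundVars {σ : Type} {ar : σ → ℕ} : GForm σ ar → Finset ℕ
  | .and φ ψ => φ.boundVars ∪ ψ.boundVars
  | .or φ ψ => φ.boundVars ∪ ψ.boundVars
  | .qu _ x φ => insert x φ.boundVars
  | _ => ∅

/-- No quantifier binding `x` lies in the scope of another quantifier binding `x`
(`seen` collects the variables bound above the current position). -/
def GForm.CleanAux {σ : Type} {ar : σ → ℕ} : Finset ℕ → GForm σ ar → Prop
  | seen, .and φ ψ => φ.CleanAux seen ∧ ψ.CleanAux seen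
  | seen, .or φ ψ => φ.CleanAux seen ∧ ψ.CleanAux seen
  | seen, .qu _ x φ => x ∉ seen ∧ φ.CleanAux (insert x seen)
  | _, _ => True

/-- A formula is clean if no free variable also occurs bound and there is no nested
quantification of the same variable. -/
def GForm.Clean {σ : Type} {ar : σ → ℕ} (β : GForm σ ar) : Prop :=
  Disjoint β.freeVars β.boundVars ∧ β.CleanAux ∅

/-- All quantifiers of the formula belong to the given set, and the formula contains no
induced generalized atoms (i.e., it is a formula of `FO(Q)` when the set is
`{∃, ∀, Q, Q^d}`). -/
def GForm.UsesOnly {σ : Type} {ar : σ → ℕ} (Qs : Set Quant1) : GForm σ ar → Prop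
  | .and φ ψ => φ.UsesOnly Qs ∧ ψ.UsesOnly Qs
  | .or φ ψ => φ.UsesOnly Qs ∧ ψ.UsesOnly Qs
  | .qu Q _ φ => Q ∈ Qs ∧ φ.UsesOnly Qs
  | .qatom _ _ _ _ => False
  | _ => True

/-- The only quantifier occurring in the formula is `∀` (in particular there is no
occurrence of `∃` or `Q`). -/
def GForm.OnlyForall {σ : Type} {ar : σ → ℕ} : GForm σ ar → Prop
  | .and φ ψ => φ.OnlyForall ∧ ψ.OnlyForall
  | .or φ ψ => φ.OnlyForall ∧ ψ.OnlyForall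
  | .qu Q _ φ => Q = allQ ∧ φ.OnlyForall
  | _ => True

/-- The translation `(·)*` on clean formulas: atoms map to themselves, it commutes with
`∧` and `∨`, and `(Qx φ)* := ∀x( (A_Q(ȳ,x) ∧ φ*) ∨ A_{Q'}(ȳ,x) )`, where `ȳ` lists
exactly all variables quantified superordinate to `Qx φ` in the original clean formula
together with its free variables (maintained in the `Finset` accumulator). -/
def star {σ : Type} {ar : σ → ℕ} : Finset ℕ → GForm σ ar → GForm σ ar
  | _, .rel R ts => .rel R ts
  | _, .nrel R ts => .nrel R ts
  | _, .eq x y => .eq x y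
  | _, .neq x y => .neq x y
  | zs, .and φ ψ => .and (star zs φ) (star zs ψ)
  | zs, .or φ ψ => .or (star zs φ) (star zs ψ)
  | zs, .qu Q x φ =>
      let l := zs.sort (· ≤ ·)
      .qu allQ x (.or (.and (.qatom Q l.length l.get x) (star (insert x zs) φ))
        (.qatom Q.prime l.length l.get x))
  | _, .qatom Q k ys x => .qatom Q k ys x

/-!
With monotone quantifiers, lax team semantics is flat: a team satisfies a formula iff each of its
assignments satisfies it in the sense of Tarski. So it is enough that `star` preserves flatness
and the Tarskian meaning.

At a quantifier `Qx φ` with superordinate and free variables `zs`, the team `U[A/x]` consists of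
the full rows `{s[a/x] : a ∈ A}`, one for each `s ∈ U`, and both induced atoms speak about one row
at a time because `x ∉ zs`. Split `U[A/x]` into `V₀ ⊨ A_Q ∧ φ` and `V₁ ⊨ A_{Q'}`. If the row of `s`
meets `V₁`, then `A_{Q'}` says that the values of `x` not taken in `V₁` form a set in `Q^A`; all of
them satisfy `φ` since the row is full. Otherwise the whole row lies in `V₀`. In both cases
monotonicity makes `{a : s[a/x] ⊨ φ}` a member of `Q^A`. Conversely, one splits `U[A/x]` by the
truth of `φ`; this cuts every row in the same way as `{a : s[a/x] ⊨ φ}` does, because `φ` depends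
only on `zs` and `x`.
-/

theorem monotoneQ_exQ : MonotoneQ exQ :=
  fun _ _ _ _ hXY hX => hX.mono hXY

theorem MonotoneQ.dual {Q : Quant1} (hQ : MonotoneQ Q) : MonotoneQ Q.dual :=
  fun C hC _ _ hXY hX hY => hX (hQ C hC _ _ (Set.compl_subset_compl.2 hXY) hY)

theorem quantifiers_subset_setOf_monotoneQ {Q : Quant1} (hQ : MonotoneQ Q) :
    {exQ, allQ, Q, Q.dual} ⊆ {q | MonotoneQ q} := by
  rintro q (rfl | rfl | rfl | rfl)
  exacts [monotoneQ_exQ, monotoneQ_exQ.dual, hQ, hQ.dual]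

theorem mem_allQ_iff {A : Type} {hA : Nonempty A} {X : Set A} :
    X ∈ allQ.mem A hA ↔ X = Set.univ := by
  change ¬ Xᶜ.Nonempty ↔ _
  rw [Set.not_nonempty_iff_eq_empty, Set.compl_empty_iff]

section Assignments

variable {A : Type} {s : PAssign A} {x y : ℕ} {a : A}

theorem pupdate_self (s : PAssign A) (x : ℕ) (a : A) : pupdate s x a x = some a :=
  if_pos rfl

theorem pupdate_of_ne (s : PAssign A) (h : y ≠ x) (a : A) : pupdate s x a y = s y :=
  if_neg h

theorem dependsOn_comp_pupdate {β : Type*} {p : PAssign A → β} {Y : Set ℕ}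
    (hp : DependsOn p Y) (x : ℕ) (a : A) :
    DependsOn (fun s => p (pupdate s x a)) (Y \ {x}) := by
  refine fun s t h => hp fun y hy => ?_
  by_cases hyx : y = x
  · rw [hyx, pupdate_self, pupdate_self]
  · rw [pupdate_of_ne _ hyx, pupdate_of_ne _ hyx, h y ⟨hy, hyx⟩]

theorem pupdate_comp_update {ρ : ℕ → ℕ} {n : ℕ} (hy : ρ y ≠ n) (s : PAssign A) (x : ℕ) (a : A) :
    pupdate s n a (Function.update ρ x n y) = pupdate (s ∘ ρ) x a y := by
  by_cases hyx : y = x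
  · rw [hyx, Function.update_self, pupdate_self, pupdate_self]
  · rw [Function.update_of_ne hyx, pupdate_of_ne _ hy, pupdate_of_ne _ hyx, Function.comp_apply]

/-- The team `U[A/x]`, called the duplication of `U` along `x`. -/
def duplicate (U : Set (PAssign A)) (x : ℕ) : Set (PAssign A) :=
  {t | ∃ s ∈ U, ∃ a, t = pupdate s x a}

/-- `Rel(U₀, x)` for the maximal subteam `U₀` of `U` whose assignments agree with `s` on `Y`.
Assignments that are undefined at `x` contribute no value. -/
def relAt (U : Set (PAssign A)) (Y : Set ℕ) (s : PAssign A) (x : ℕ) : Set A :=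
  {a | ∃ t ∈ U, (∀ y ∈ Y, t y = s y) ∧ t x = some a}

variable {U : Set (PAssign A)} {Y : Set ℕ}

theorem relAt_pupdate (hx : x ∉ Y) : relAt U Y (pupdate s x a) x = relAt U Y s x := by
  have h_agree : ∀ y ∈ Y, pupdate s x a y = s y :=
    fun y hy => pupdate_of_ne s (ne_of_mem_of_not_mem hy hx) a
  simp +contextual only [relAt, h_agree]

theorem mem_relAt_of_pupdate_mem (hx : x ∉ Y) (h : pupdate s x a ∈ U) : a ∈ relAt U Y s x :=
  ⟨_, h, fun _ hy => pupdate_of_ne s (ne_of_mem_of_not_mem hy hx) a, pupdate_self s x a⟩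

theorem relAt_sep_duplicate {p : PAssign A → Prop} (hx : x ∉ Y) (hp : DependsOn p (insert x Y))
    (hs : s ∈ U) : relAt {t ∈ duplicate U x | p t} Y s x = {a | p (pupdate s x a)} := by
  refine Set.Subset.antisymm ?_ fun a ha => mem_relAt_of_pupdate_mem hx ⟨⟨s, hs, a, rfl⟩, ha⟩
  rintro a ⟨t, ⟨-, ht⟩, h_agree, hta⟩
  have h_row : ∀ y ∈ insert x Y, t y = pupdate s x a y := by
    rintro y (rfl | hy)
    · rw [hta, pupdate_self]
    · rw [h_agree y hy, pupdate_of_ne s (ne_of_mem_of_not_mem hy hx)]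
  exact (hp h_row).mp ht

end Assignments

section Flatness

variable {σ : Type} {ar : σ → ℕ} {M : TModel σ ar} {U : Set (PAssign M.A)} {Q : Quant1}
  {φ ψ : GForm σ ar} {p q : PAssign M.A → Prop} {zs : Finset ℕ} {x : ℕ}

theorem gSat_allQ_iff : GSat M U (.qu allQ x φ) ↔ GSat M (duplicate U x) φ := by
  constructor
  · rintro ⟨f, hf, hφ⟩
    convert hφ using 1
    ext t
    refine exists_congr fun s => and_congr_right fun hs => ?_
    simp only [mem_allQ_iff.1 (hf s hs), Set.mem_univ, true_and]
  · intro hφ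
    refine ⟨fun _ => Set.univ, fun _ _ => mem_allQ_iff.2 rfl, ?_⟩
    simpa only [duplicate, Set.mem_univ, true_and] using hφ

/-- The induced atom `A_Q(ȳ,x)` in which `ȳ` lists `zs` in increasing order. -/
def GForm.qatomOn (Q : Quant1) (zs : Finset ℕ) (x : ℕ) : GForm σ ar :=
  .qatom Q (zs.sort (· ≤ ·)).length (zs.sort (· ≤ ·)).get x

theorem gSat_qatomOn_iff :
    GSat M U (.qatomOn Q zs x) ↔ ∀ s ∈ U, relAt U zs s x ∈ Q.mem M.A M.ne := by
  have h_agree (s t : PAssign M.A) :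
      (∀ i, t ((zs.sort (· ≤ ·)).get i) = s ((zs.sort (· ≤ ·)).get i)) ↔
        ∀ y ∈ (zs : Set ℕ), t y = s y := by
    rw [← List.forall_mem_iff_get (p := fun y => t y = s y)]
    simp only [Finset.mem_sort, Finset.mem_coe]
  simp only [GForm.qatomOn, GSat, relAt, h_agree]

theorem setOf_pupdate_mem_of_split (hQ : MonotoneQ Q) (hx : x ∉ zs) {V₀ V₁ : Set (PAssign M.A)}
    {s : PAssign M.A} (h_row : ∀ a, pupdate s x a ∈ V₀ ∪ V₁)
    (h₀ : GSat M V₀ (.qatomOn Q zs x)) (hp : ∀ t ∈ V₀, p t)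
    (h₁ : GSat M V₁ (.qatomOn Q.prime zs x)) :
    {a | p (pupdate s x a)} ∈ Q.mem M.A M.ne := by
  rw [gSat_qatomOn_iff] at h₀ h₁
  by_cases h_meet : ∃ a, pupdate s x a ∈ V₁
  · obtain ⟨a, ha⟩ := h_meet
    have h_compl : (relAt V₁ zs s x)ᶜ ∈ Q.mem M.A M.ne := by
      rw [← relAt_pupdate (a := a) hx]
      exact h₁ _ ha
    refine hQ _ _ _ _ (fun b hb => hp _ ?_) h_compl
    exact (h_row b).resolve_right fun hbV₁ => hb (mem_relAt_of_pupdate_mem hx hbV₁)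
  · have h_mem (a : M.A) : pupdate s x a ∈ V₀ :=
      (h_row a).resolve_right fun ha => h_meet ⟨a, ha⟩
    obtain ⟨a⟩ := M.ne
    exact hQ _ _ _ _ (fun b _ => hp _ (h_mem b)) (h₀ _ (h_mem a))

/-- `φ` is flat over `M`, and `p` is its truth condition at a single assignment. -/
def GForm.IsFlat (M : TModel σ ar) (φ : GForm σ ar) (p : PAssign M.A → Prop) : Prop :=
  ∀ U : Set (PAssign M.A), GSat M U φ ↔ ∀ s ∈ U, p s

namespace GForm.IsFlat

theorem and (hφ : φ.IsFlat M p) (hψ : ψ.IsFlat M q) :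
    (GForm.and φ ψ).IsFlat M (fun s => p s ∧ q s) :=
  fun U => (and_congr (hφ U) (hψ U)).trans forall₂_and.symm

theorem or (hφ : φ.IsFlat M p) (hψ : ψ.IsFlat M q) :
    (GForm.or φ ψ).IsFlat M (fun s => p s ∨ q s) := by
  intro U
  constructor
  · rintro ⟨U₀, U₁, -, -, rfl, h₀, h₁⟩ s (hs | hs)
    · exact .inl ((hφ U₀).1 h₀ s hs)
    · exact .inr ((hψ U₁).1 h₁ s hs)
  · intro h
    refine ⟨{s ∈ U | p s}, {s ∈ U | q s}, Set.sep_subset _ _, Set.sep_subset _ _, ?_,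
      (hφ _).2 fun _ hs => hs.2, (hψ _).2 fun _ hs => hs.2⟩
    rw [← Set.sep_or]
    exact Set.sep_eq_self_iff_mem_true.2 h

theorem qu (hQ : MonotoneQ Q) (hφ : φ.IsFlat M p) :
    (GForm.qu Q x φ).IsFlat M (fun s => {a | p (pupdate s x a)} ∈ Q.mem M.A M.ne) := by
  intro U
  constructor
  · rintro ⟨f, hf, hfφ⟩ s hs
    exact hQ _ _ _ _ (fun a ha => (hφ _).1 hfφ _ ⟨s, hs, a, ha, rfl⟩) (hf s hs)
  · intro h
    refine ⟨fun s => {a | p (pupdate s x a)}, h, (hφ _).2 ?_⟩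
    rintro _ ⟨s, -, a, ha, rfl⟩
    exact ha

theorem allQ_qatomOn (hQ : MonotoneQ Q) (hx : x ∉ zs) (hφ : φ.IsFlat M p)
    (hp : DependsOn p (insert x (zs : Set ℕ))) :
    (GForm.qu allQ x (.or (.and (.qatomOn Q zs x) φ) (.qatomOn Q.prime zs x))).IsFlat M
      (fun s => {a | p (pupdate s x a)} ∈ Q.mem M.A M.ne) := by
  intro U
  rw [gSat_allQ_iff]
  constructor
  · rintro ⟨V₀, V₁, -, -, h_union, ⟨h₀, hφ₀⟩, h₁⟩ s hs
    have h_row (a : M.A) : pupdate s x a ∈ V₀ ∪ V₁ := h_union ▸ ⟨s, hs, a, rfl⟩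
    exact setOf_pupdate_mem_of_split hQ hx h_row h₀ ((hφ V₀).1 hφ₀) h₁
  · intro h
    have hnp : DependsOn (fun t => ¬ p t) (insert x (zs : Set ℕ)) :=
      fun _ _ h_agree => congrArg Not (hp h_agree)
    refine ⟨{t ∈ duplicate U x | p t}, {t ∈ duplicate U x | ¬ p t}, Set.sep_subset _ _,
      Set.sep_subset _ _, ?_, ⟨gSat_qatomOn_iff.2 ?_, (hφ _).2 fun _ ht => ht.2⟩,
      gSat_qatomOn_iff.2 ?_⟩
    · rw [← Set.sep_or]
      exact Set.sep_eq_self_iff_mem_true.2 fun t _ => em (p t)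
    · rintro _ ⟨⟨s, hs, a, rfl⟩, -⟩
      rw [relAt_pupdate hx, relAt_sep_duplicate hx hp hs]
      exact h s hs
    · rintro _ ⟨⟨s, hs, a, rfl⟩, -⟩
      rw [relAt_pupdate hx, relAt_sep_duplicate hx hnp hs]
      change {a | p (pupdate s x a)}ᶜᶜ ∈ Q.mem M.A M.ne
      rw [compl_compl]
      exact h s hs

end GForm.IsFlat

end Flatness

section TarskianSemantics

variable {σ : Type} {ar : σ → ℕ} {M : TModel σ ar} {φ : GForm σ ar}

/-- Tarskian satisfaction of formulas without induced atoms. As in `GSat`, an atom about a variable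
with no value fails; induced atoms, which have no Tarskian meaning, are set to be false. -/
def TSat (M : TModel σ ar) : PAssign M.A → GForm σ ar → Prop
  | s, .rel R ts => ∃ vv : Fin (ar R) → M.A, (∀ i, s (ts i) = some (vv i)) ∧ M.rel R vv
  | s, .nrel R ts => ∃ vv : Fin (ar R) → M.A, (∀ i, s (ts i) = some (vv i)) ∧ ¬ M.rel R vv
  | s, .eq x y => ∃ a : M.A, s x = some a ∧ s y = some a
  | s, .neq x y => ∃ a b : M.A, s x = some a ∧ s y = some b ∧ a ≠ b
  | s, .and φ ψ => TSat M s φ ∧ TSat M s ψ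
  | s, .or φ ψ => TSat M s φ ∨ TSat M s ψ
  | s, .qu Q x φ => {a | TSat M (pupdate s x a) φ} ∈ Q.mem M.A M.ne
  | _, .qatom _ _ _ _ => False

theorem dependsOn_tSat (φ : GForm σ ar) : DependsOn (TSat M · φ) (φ.freeVars : Set ℕ) := by
  induction φ with
  | rel R ts | nrel R ts =>
    intro s t h
    have h_args (i) : s (ts i) = t (ts i) := h _ (by simp [GForm.freeVars])
    simp only [TSat, h_args]
  | eq x y | neq x y =>
    intro s t h
    simp only [TSat, h x (by simp [GForm.freeVars]), h y (by simp [GForm.freeVars])]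
  | and φ ψ ihφ ihψ =>
    simp only [GForm.freeVars, Finset.coe_union]
    exact fun s t h => congrArg₂ And (ihφ.mono Set.subset_union_left h)
      (ihψ.mono Set.subset_union_right h)
  | or φ ψ ihφ ihψ =>
    simp only [GForm.freeVars, Finset.coe_union]
    exact fun s t h => congrArg₂ Or (ihφ.mono Set.subset_union_left h)
      (ihψ.mono Set.subset_union_right h)
  | qu Q x φ ih =>
    simp only [GForm.freeVars, Finset.coe_erase]
    intro s t h
    have h_body (a) := dependsOn_comp_pupdate ih x a h
    simp only [TSat, h_body]
  | qatom Q k ys x => exact fun _ _ _ => rfl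

theorem isFlat_tSat (hφ : φ.UsesOnly {Q | MonotoneQ Q}) : φ.IsFlat M (TSat M · φ) := by
  induction φ with
  | rel R ts | nrel R ts | eq x y | neq x y => exact fun _ => Iff.rfl
  | and φ ψ ihφ ihψ => exact (ihφ hφ.1).and (ihψ hφ.2)
  | or φ ψ ihφ ihψ => exact (ihφ hφ.1).or (ihψ hφ.2)
  | qu Q x φ ih => exact (ih hφ.2).qu hφ.1
  | qatom Q k ys x => exact hφ.elim

theorem isFlat_star {zs : Finset ℕ} (hφ : φ.UsesOnly {Q | MonotoneQ Q}) (h_free : φ.freeVars ⊆ zs)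
    (h_clean : φ.CleanAux zs) : (star zs φ).IsFlat M (TSat M · φ) := by
  induction φ generalizing zs with
  | rel R ts | nrel R ts | eq x y | neq x y => exact fun _ => Iff.rfl
  | and φ ψ ihφ ihψ =>
    obtain ⟨h_freeφ, h_freeψ⟩ := Finset.union_subset_iff.1 h_free
    exact (ihφ hφ.1 h_freeφ h_clean.1).and (ihψ hφ.2 h_freeψ h_clean.2)
  | or φ ψ ihφ ihψ =>
    obtain ⟨h_freeφ, h_freeψ⟩ := Finset.union_subset_iff.1 h_free
    exact (ihφ hφ.1 h_freeφ h_clean.1).or (ihψ hφ.2 h_freeψ h_clean.2)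
  | qu Q x φ ih =>
    have h_body : φ.freeVars ⊆ insert x zs := Finset.subset_insert_iff.2 h_free
    refine (ih hφ.2 h_body h_clean.2).allQ_qatomOn hφ.1 h_clean.1 ?_
    exact (dependsOn_tSat φ).mono (by exact_mod_cast h_body)
  | qatom Q k ys x => exact hφ.elim

end TarskianSemantics

section CleanFormulas

variable {σ : Type} {ar : σ → ℕ} {M : TModel σ ar} {φ : GForm σ ar}

namespace GForm

theorem UsesOnly.mono {S T : Set Quant1} (hST : S ⊆ T) (hφ : φ.UsesOnly S) : φ.UsesOnly T := by
  induction φ with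
  | and φ ψ ihφ ihψ | or φ ψ ihφ ihψ => exact ⟨ihφ hφ.1, ihψ hφ.2⟩
  | qu Q x φ ih => exact ⟨hST hφ.1, ih hφ.2⟩
  | _ => exact hφ

theorem CleanAux.union {seen zs : Finset ℕ} (hφ : φ.CleanAux seen)
    (h_disj : Disjoint zs φ.boundVars) : φ.CleanAux (zs ∪ seen) := by
  induction φ generalizing seen with
  | and φ ψ ihφ ihψ | or φ ψ ihφ ihψ =>
    obtain ⟨h_disjφ, h_disjψ⟩ := Finset.disjoint_union_right.1 h_disj
    exact ⟨ihφ hφ.1 h_disjφ, ihψ hφ.2 h_disjψ⟩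
  | qu Q x φ ih =>
    obtain ⟨hx, h_disj⟩ := Finset.disjoint_insert_right.1 h_disj
    refine ⟨Finset.notMem_union.2 ⟨hx, hφ.1⟩, ?_⟩
    rw [← Finset.union_insert]
    exact ih hφ.2 h_disj
  | _ => trivial

theorem Clean.cleanAux_freeVars (hφ : φ.Clean) : φ.CleanAux φ.freeVars := by
  simpa only [Finset.union_empty] using hφ.2.union hφ.1

theorem onlyForall_star (zs : Finset ℕ) (φ : GForm σ ar) : (star zs φ).OnlyForall := by
  induction φ generalizing zs with
  | and φ ψ ihφ ihψ | or φ ψ ihφ ihψ => exact ⟨ihφ zs, ihψ zs⟩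
  | qu Q x φ ih => exact ⟨rfl, ⟨trivial, ih _⟩, trivial⟩
  | _ => trivial

/-- Renames free variables along `ρ` and bound variables to `n, n + 1, …` according to their
quantifier depth. Free variables are not captured as long as `ρ` sends them below `n`. -/
def rename : (ℕ → ℕ) → ℕ → GForm σ ar → GForm σ ar
  | ρ, _, .rel R ts => .rel R (ρ ∘ ts)
  | ρ, _, .nrel R ts => .nrel R (ρ ∘ ts)
  | ρ, _, .eq x y => .eq (ρ x) (ρ y)
  | ρ, _, .neq x y => .neq (ρ x) (ρ y)
  | ρ, n, .and φ ψ => .and (φ.rename ρ n) (ψ.rename ρ n)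
  | ρ, n, .or φ ψ => .or (φ.rename ρ n) (ψ.rename ρ n)
  | ρ, n, .qu Q x φ => .qu Q n (φ.rename (Function.update ρ x n) (n + 1))
  | ρ, _, .qatom Q k ys x => .qatom Q k (ρ ∘ ys) (ρ x)

variable {ρ : ℕ → ℕ} {n : ℕ}

theorem update_lt_succ_of_mem_freeVars {x : ℕ} (hρ : ∀ y ∈ φ.freeVars.erase x, ρ y < n) :
    ∀ y ∈ φ.freeVars, Function.update ρ x n y < n + 1 := by
  intro y hy
  by_cases hyx : y = x
  · rw [hyx, Function.update_self]
    exact n.lt_succ_self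
  · rw [Function.update_of_ne hyx]
    exact (hρ y (Finset.mem_erase.2 ⟨hyx, hy⟩)).trans n.lt_succ_self

theorem UsesOnly.rename {S : Set Quant1} (hφ : φ.UsesOnly S) (ρ : ℕ → ℕ) (n : ℕ) :
    (φ.rename ρ n).UsesOnly S := by
  induction φ generalizing ρ n with
  | and φ ψ ihφ ihψ | or φ ψ ihφ ihψ => exact ⟨ihφ hφ.1 ρ n, ihψ hφ.2 ρ n⟩
  | qu Q x φ ih => exact ⟨hφ.1, ih hφ.2 _ _⟩
  | _ => exact hφ

theorem lt_of_mem_freeVars_rename (hρ : ∀ y ∈ φ.freeVars, ρ y < n) :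
    ∀ z ∈ (φ.rename ρ n).freeVars, z < n := by
  induction φ generalizing ρ n with
  | and φ ψ ihφ ihψ | or φ ψ ihφ ihψ =>
    obtain ⟨hρφ, hρψ⟩ := Finset.forall_mem_union.1 hρ
    exact Finset.forall_mem_union.2 ⟨ihφ hρφ, ihψ hρψ⟩
  | qu Q x φ ih =>
    intro z hz
    obtain ⟨hzn, hz⟩ := Finset.mem_erase.1 hz
    have := ih (update_lt_succ_of_mem_freeVars hρ) z hz
    omega
  | _ => simpa [GForm.rename, freeVars] using hρ

theorem le_of_mem_boundVars_rename {z : ℕ} (hz : z ∈ (φ.rename ρ n).boundVars) : n ≤ z := by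
  induction φ generalizing ρ n with
  | and φ ψ ihφ ihψ | or φ ψ ihφ ihψ => exact (Finset.mem_union.1 hz).elim ihφ ihψ
  | qu Q x φ ih =>
    rcases Finset.mem_insert.1 hz with rfl | hz
    · exact le_rfl
    · exact n.le_succ.trans (ih hz)
  | _ => exact absurd hz (Finset.notMem_empty z)

theorem cleanAux_rename {seen : Finset ℕ} (h_seen : ∀ z ∈ seen, z < n) :
    (φ.rename ρ n).CleanAux seen := by
  induction φ generalizing ρ n seen with
  | and φ ψ ihφ ihψ | or φ ψ ihφ ihψ => exact ⟨ihφ h_seen, ihψ h_seen⟩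
  | qu _ x φ ih =>
    refine ⟨fun hn => (h_seen n hn).false, ih ?_⟩
    exact (Finset.forall_mem_insert ..).2
      ⟨n.lt_succ_self, fun z hz => (h_seen z hz).trans n.lt_succ_self⟩
  | _ => trivial

theorem clean_rename (hρ : ∀ y ∈ φ.freeVars, ρ y < n) : (φ.rename ρ n).Clean := by
  refine ⟨Finset.disjoint_left.2 fun z hz_free hz_bound => ?_, cleanAux_rename (by simp)⟩
  exact (lt_of_mem_freeVars_rename hρ z hz_free).not_ge (le_of_mem_boundVars_rename hz_bound)

theorem tSat_rename_iff {s : PAssign M.A} (hρ : ∀ y ∈ φ.freeVars, ρ y < n) :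
    TSat M s (φ.rename ρ n) ↔ TSat M (s ∘ ρ) φ := by
  induction φ generalizing ρ n s with
  | and φ ψ ihφ ihψ =>
    obtain ⟨hρφ, hρψ⟩ := Finset.forall_mem_union.1 hρ
    exact and_congr (ihφ hρφ) (ihψ hρψ)
  | or φ ψ ihφ ihψ =>
    obtain ⟨hρφ, hρψ⟩ := Finset.forall_mem_union.1 hρ
    exact or_congr (ihφ hρφ) (ihψ hρψ)
  | qu Q x φ ih =>
    have h_body (a : M.A) :
        TSat M (pupdate s n a) (φ.rename (Function.update ρ x n) (n + 1)) ↔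
          TSat M (pupdate (s ∘ ρ) x a) φ := by
      rw [ih (update_lt_succ_of_mem_freeVars hρ)]
      refine iff_of_eq (dependsOn_tSat φ fun y hy => ?_)
      by_cases hyx : y = x
      · simp only [Function.comp_apply, hyx, Function.update_self, pupdate_self]
      · exact pupdate_comp_update (hρ y (Finset.mem_erase.2 ⟨hyx, hy⟩)).ne s x a
    simp only [GForm.rename, TSat, h_body]
  | _ => exact Iff.rfl

/-- A clean variant of `φ`: its bound variables are renamed beyond all its free variables. -/
def cleaned (φ : GForm σ ar) : GForm σ ar :=
  φ.rename id (φ.freeVars.sup id + 1)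

theorem lt_sup_freeVars_succ (φ : GForm σ ar) : ∀ y ∈ φ.freeVars, y < φ.freeVars.sup id + 1 :=
  fun _ hy => Nat.lt_succ_of_le (Finset.le_sup (f := id) hy)

theorem clean_cleaned (φ : GForm σ ar) : φ.cleaned.Clean :=
  clean_rename φ.lt_sup_freeVars_succ

theorem UsesOnly.cleaned {S : Set Quant1} (hφ : φ.UsesOnly S) : φ.cleaned.UsesOnly S :=
  hφ.rename _ _

theorem tSat_cleaned_iff {s : PAssign M.A} : TSat M s φ.cleaned ↔ TSat M s φ :=
  tSat_rename_iff φ.lt_sup_freeVars_succ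

end GForm

variable {U : Set (PAssign M.A)}

theorem gSat_cleaned_iff (hφ : φ.UsesOnly {Q | MonotoneQ Q}) :
    GSat M U φ.cleaned ↔ GSat M U φ := by
  simp only [isFlat_tSat hφ.cleaned U, isFlat_tSat hφ U, GForm.tSat_cleaned_iff]

theorem gSat_star_iff (hφ : φ.UsesOnly {Q | MonotoneQ Q}) (h_clean : φ.Clean) :
    GSat M U (star φ.freeVars φ) ↔ GSat M U φ :=
  (isFlat_star hφ subset_rfl h_clean.cleanAux_freeVars U).trans (isFlat_tSat hφ U).symm

end CleanFormulas

theorem stmt13_general {σ : Type} {ar : σ → ℕ} {χ : GForm σ ar}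
    (hχ : χ.UsesOnly {Q | MonotoneQ Q}) :
    ∃ χs : GForm σ ar,
      (χ.Clean → χs = star χ.freeVars χ) ∧
      χs.OnlyForall ∧
      ∀ (M : TModel σ ar) (U : Set (PAssign M.A)), GSat M U χ ↔ GSat M U χs := by
  by_cases h_clean : χ.Clean
  · exact ⟨star χ.freeVars χ, fun _ => rfl, GForm.onlyForall_star _ _,
      fun _ _ => (gSat_star_iff hχ h_clean).symm⟩
  · refine ⟨star χ.cleaned.freeVars χ.cleaned, fun h => absurd h h_clean,
      GForm.onlyForall_star _ _, fun M U => ?_⟩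
    rw [gSat_star_iff hχ.cleaned χ.clean_cleaned, gSat_cleaned_iff hχ]

/-- Monotone type (1) generalized quantifiers can be eliminated in favour of the
induced generalized atoms: every formula `χ` of `FO(Q)` (for `Q` a monotone type (1)
quantifier) translates into a formula `χs` of `FO(𝒜_Q)` — namely `χ* = star χ.freeVars χ`
whenever `χ` is clean — such that `𝔄,U ⊨ χ` iff `𝔄,U ⊨ χs` for all models `𝔄` and all
teams `U` whose domain contains the free variables of `χ`; moreover `χs` contains no
occurrence of `∃` or `Q`, its only quantifier being `∀`. -/
theorem stmt13 (σ : Type) (ar : σ → ℕ) (Q : Quant1) (hQ : MonotoneQ Q)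
    (χ : GForm σ ar) (hχ : χ.UsesOnly {exQ, allQ, Q, Q.dual}) :
    ∃ χs : GForm σ ar,
      (χ.Clean → χs = star χ.freeVars χ) ∧
      χs.OnlyForall ∧
      ∀ (M : TModel σ ar) (U : Set (PAssign M.A)),
        (∃ Z : Finset ℕ, χ.freeVars ⊆ Z ∧ ∀ s ∈ U, ∀ x : ℕ, (s x ≠ none ↔ x ∈ Z)) →
        (GSat M U χ ↔ GSat M U χs) := by
  obtain ⟨χs, h_star, h_forall, h_iff⟩ :=
    stmt13_general (hχ.mono (quantifiers_subset_setOf_monotoneQ hQ))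
  exact ⟨χs, h_star, h_forall, fun M U _ => h_iff M U⟩
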